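/- arXiv:1511.03993 — 3 statements merged into one kernel-verified Lean document; each statement's English description precedes it below -/
import Mathlib

section
/- There exist five quintuples of real numbers (u0, u1, u2, x2, x3) satisfying g0 = g1 = g2 = g3 = g4 = 0, one in each of the following boxes: (i) 0.96 < u0 < 0.97, 0.07 < u1 < 0.08, 0.24 < u2 < 0.25, 0.66 < x2 < 0.67, 1.18 < x3 < 1.19; (ii) 0.12 < u0 < 0.13, 0.10 < u1 < 0.11, 0.24 < u2 < 0.25, 1.00 < x2 < 1.01, 0.121 < x3 < 0.122; (iii) 0.22 < u0 < 0.23, 0.15 < u1 < 0.16, 1.13 < u2 < 1.14, 1.00 < x2 < 1.01, 0.207 < x3 < 0.208; (iv) 1.57 < u0 < 1.58, 1.36 < u1 < 1.37, 0.31 < u2 < 0.32, 1.11 < x2 < 1.12, 1.53 < x3 < 1.54; (v) 2.18 < u0 < 2.19, 0.10 < u1 < 0.11, 0.33 < u2 < 0.34, 1.59 < x2 < 1.60, 2.16 < x3 < 2.17. (These give five non-isometric non-naturally reductive left-invariant Einstein metrics on E7 associated to the subgroup SU(6)xSU(2)xU(1).) -/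
noncomputable def g0 (u0 u1 u2 x2 x3 : ℝ) : ℝ :=
  5*u0*u1*x2 ^ 2*x3 ^ 2 + 3*u0*u1*x2 ^ 2 + 10*u0*u1*x3 ^ 2 - 15*u1 ^ 2*x2 ^ 2*x3 ^ 2 - u1 ^ 2*x2 ^ 2 - 2*x2 ^ 2*x3 ^ 2

noncomputable def g1 (u0 u1 u2 x2 x3 : ℝ) : ℝ :=
  15*u1 ^ 2*u2*x2 ^ 2*x3 ^ 2 + u1 ^ 2*u2*x2 ^ 2 - 8*u1*u2 ^ 2*x2 ^ 2*x3 ^ 2 - 4*u1*u2 ^ 2*x3 ^ 2 - 6*u1*x2 ^ 2*x3 ^ 2 + 2*u2*x2 ^ 2*x3 ^ 2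

noncomputable def g2 (u0 u1 u2 x2 x3 : ℝ) : ℝ :=
  u0*u2*x2 ^ 2*x3 + 9*u1*u2*x2 ^ 2*x3 + 104*u2 ^ 2*x2 ^ 2*x3 + 24*u2 ^ 2*x3 + 36*u2*x2 ^ 3*x3 + 6*u2*x2 ^ 3 - 216*u2*x2 ^ 2*x3 + 6*u2*x2*x3 ^ 2 - 6*u2*x2 + 36*x2 ^ 2*x3

noncomputable def g3 (u0 u1 u2 x2 x3 : ℝ) : ℝ :=
  -u0*x2 ^ 2*x3 + 4*u0*x3 - 9*u1*x2 ^ 2*x3 - 56*u2*x2 ^ 2*x3 + 56*u2*x3 - 72*x2 ^ 3*x3 - 18*x2 ^ 3 + 216*x2 ^ 2*x3 + 6*x2*x3 ^ 2 - 144*x2*x3 + 18*x2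

noncomputable def g4 (u0 u1 u2 x2 x3 : ℝ) : ℝ :=
  9*u0*x2 ^ 2 - 4*u0*x3 ^ 2 + 9*u1*x2 ^ 2 - 56*u2*x3 ^ 2 + 36*x2 ^ 3*x3 ^ 2 + 102*x2 ^ 3*x3 - 216*x2 ^ 2*x3 - 102*x2*x3 ^ 3 + 144*x2*x3 ^ 2 + 78*x2*x3

noncomputable def dg0 (u0 u1 u2 x2 x3 z0 z1 z2 z3 z4 : ℝ) : ℝ :=
  ((5)*u1*x2 ^ 2*x3 ^ 2 + (3)*u1*x2 ^ 2 + (10)*u1*x3 ^ 2) * z0 +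
  ((5)*u0*x2 ^ 2*x3 ^ 2 + (3)*u0*x2 ^ 2 + (10)*u0*x3 ^ 2 + (-30)*u1*x2 ^ 2*x3 ^ 2 + (-2)*u1*x2 ^ 2) * z1 +
  (0) * z2 +
  ((10)*u0*u1*x2*x3 ^ 2 + (6)*u0*u1*x2 + (-30)*u1 ^ 2*x2*x3 ^ 2 + (-2)*u1 ^ 2*x2 + (-4)*x2*x3 ^ 2) * z3 +
  ((10)*u0*u1*x2 ^ 2*x3 + (20)*u0*u1*x3 + (-30)*u1 ^ 2*x2 ^ 2*x3 + (-4)*x2 ^ 2*x3) * z4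

noncomputable def dg1 (u0 u1 u2 x2 x3 z0 z1 z2 z3 z4 : ℝ) : ℝ :=
  (0) * z0 +
  ((30)*u1*u2*x2 ^ 2*x3 ^ 2 + (2)*u1*u2*x2 ^ 2 + (-8)*u2 ^ 2*x2 ^ 2*x3 ^ 2 + (-4)*u2 ^ 2*x3 ^ 2 + (-6)*x2 ^ 2*x3 ^ 2) * z1 +
  ((15)*u1 ^ 2*x2 ^ 2*x3 ^ 2 + (1)*u1 ^ 2*x2 ^ 2 + (-16)*u1*u2*x2 ^ 2*x3 ^ 2 + (-8)*u1*u2*x3 ^ 2 + (2)*x2 ^ 2*x3 ^ 2) * z2 +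
  ((30)*u1 ^ 2*u2*x2*x3 ^ 2 + (2)*u1 ^ 2*u2*x2 + (-16)*u1*u2 ^ 2*x2*x3 ^ 2 + (-12)*u1*x2*x3 ^ 2 + (4)*u2*x2*x3 ^ 2) * z3 +
  ((30)*u1 ^ 2*u2*x2 ^ 2*x3 + (-16)*u1*u2 ^ 2*x2 ^ 2*x3 + (-8)*u1*u2 ^ 2*x3 + (-12)*u1*x2 ^ 2*x3 + (4)*u2*x2 ^ 2*x3) * z4

noncomputable def dg2 (u0 u1 u2 x2 x3 z0 z1 z2 z3 z4 : ℝ) : ℝ :=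
  ((1)*u2*x2 ^ 2*x3) * z0 +
  ((9)*u2*x2 ^ 2*x3) * z1 +
  ((1)*u0*x2 ^ 2*x3 + (9)*u1*x2 ^ 2*x3 + (208)*u2*x2 ^ 2*x3 + (48)*u2*x3 + (36)*x2 ^ 3*x3 + (6)*x2 ^ 3 + (-216)*x2 ^ 2*x3 + (6)*x2*x3 ^ 2 + (-6)*x2) * z2 +
  ((2)*u0*u2*x2*x3 + (18)*u1*u2*x2*x3 + (208)*u2 ^ 2*x2*x3 + (108)*u2*x2 ^ 2*x3 + (18)*u2*x2 ^ 2 + (-432)*u2*x2*x3 + (6)*u2*x3 ^ 2 + (-6)*u2 + (72)*x2*x3) * z3 +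
  ((1)*u0*u2*x2 ^ 2 + (9)*u1*u2*x2 ^ 2 + (104)*u2 ^ 2*x2 ^ 2 + (24)*u2 ^ 2 + (36)*u2*x2 ^ 3 + (-216)*u2*x2 ^ 2 + (12)*u2*x2*x3 + (36)*x2 ^ 2) * z4

noncomputable def dg3 (u0 u1 u2 x2 x3 z0 z1 z2 z3 z4 : ℝ) : ℝ :=
  ((-1)*x2 ^ 2*x3 + (4)*x3) * z0 +
  ((-9)*x2 ^ 2*x3) * z1 +
  ((-56)*x2 ^ 2*x3 + (56)*x3) * z2 +
  ((-2)*u0*x2*x3 + (-18)*u1*x2*x3 + (-112)*u2*x2*x3 + (-216)*x2 ^ 2*x3 + (-54)*x2 ^ 2 + (432)*x2*x3 + (6)*x3 ^ 2 + (-144)*x3 + (18)) * z3 +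
  ((-1)*u0*x2 ^ 2 + (4)*u0 + (-9)*u1*x2 ^ 2 + (-56)*u2*x2 ^ 2 + (56)*u2 + (-72)*x2 ^ 3 + (216)*x2 ^ 2 + (12)*x2*x3 + (-144)*x2) * z4

noncomputable def dg4 (u0 u1 u2 x2 x3 z0 z1 z2 z3 z4 : ℝ) : ℝ :=
  ((9)*x2 ^ 2 + (-4)*x3 ^ 2) * z0 +
  ((9)*x2 ^ 2) * z1 +
  ((-56)*x3 ^ 2) * z2 +
  ((18)*u0*x2 + (18)*u1*x2 + (108)*x2 ^ 2*x3 ^ 2 + (306)*x2 ^ 2*x3 + (-432)*x2*x3 + (-102)*x3 ^ 3 + (144)*x3 ^ 2 + (78)*x3) * z3 +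
  ((-8)*u0*x3 + (-112)*u2*x3 + (72)*x2 ^ 3*x3 + (102)*x2 ^ 3 + (-216)*x2 ^ 2 + (-306)*x2*x3 ^ 2 + (288)*x2*x3 + (78)*x2) * z4

def AA (r δ M N K a b c d : ℝ) : Prop :=
  0 ≤ M ∧ 0 ≤ N ∧ 0 ≤ K ∧ |c| ≤ M ∧ |a| ≤ M ∧ |b| ≤ M ∧ |a - c| ≤ N * r ∧ |b - c| ≤ N * r ∧
    |d| ≤ N * δ ∧ |a - b - d| ≤ K * r * δ

lemma AA.const (r δ k : ℝ) : AA r δ |k| 0 0 k k k 0 := by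
  simp [AA]

lemma abs_mul_le' {x y X Y : ℝ} (hx : |x| ≤ X) (hy : |y| ≤ Y) : |x * y| ≤ X * Y := by
  rw [abs_mul]; exact mul_le_mul hx hy (abs_nonneg _) ((abs_nonneg _).trans hx)

lemma abs_add_le' {x y X Y : ℝ} (hx : |x| ≤ X) (hy : |y| ≤ Y) : |x + y| ≤ X + Y :=
  (abs_add_le x y).trans (add_le_add hx hy)

lemma AA.mul {r δ M₁ N₁ K₁ a₁ b₁ c₁ d₁ M₂ N₂ K₂ a₂ b₂ c₂ d₂ : ℝ}
    (h₁ : AA r δ M₁ N₁ K₁ a₁ b₁ c₁ d₁) (h₂ : AA r δ M₂ N₂ K₂ a₂ b₂ c₂ d₂) :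
    AA r δ (M₁ * M₂) (N₁ * M₂ + M₁ * N₂) (K₁ * M₂ + 2 * N₁ * N₂ + M₁ * K₂)
      (a₁ * a₂) (b₁ * b₂) (c₁ * c₂) (d₁ * c₂ + c₁ * d₂) := by
  obtain ⟨m1, n1, k1, C1, A1, B1, ac1, bc1, D1, E1⟩ := h₁
  obtain ⟨m2, n2, k2, C2, A2, B2, ac2, bc2, D2, E2⟩ := h₂
  refine ⟨by positivity, by positivity, by positivity, abs_mul_le' C1 C2, abs_mul_le' A1 A2,
    abs_mul_le' B1 B2, ?_, ?_, ?_, ?_⟩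
  · have := abs_add_le' (abs_mul_le' ac1 A2) (abs_mul_le' C1 ac2)
    convert this using 1
    · congr 1; ring
    · ring
  · have := abs_add_le' (abs_mul_le' bc1 B2) (abs_mul_le' C1 bc2)
    convert this using 1
    · congr 1; ring
    · ring
  · have := abs_add_le' (abs_mul_le' D1 C2) (abs_mul_le' C1 D2)
    convert this using 1
    ring
  · have := abs_add_le' (abs_add_le' (abs_mul_le' E1 A2) (abs_mul_le' D1 ac2))
      (abs_add_le' (abs_mul_le' bc1 D2) (abs_mul_le' B1 E2))
    convert this using 1
    · congr 1; ring
    · ring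

lemma AA.add {r δ M₁ N₁ K₁ a₁ b₁ c₁ d₁ M₂ N₂ K₂ a₂ b₂ c₂ d₂ : ℝ}
    (h₁ : AA r δ M₁ N₁ K₁ a₁ b₁ c₁ d₁) (h₂ : AA r δ M₂ N₂ K₂ a₂ b₂ c₂ d₂) :
    AA r δ (M₁ + M₂) (N₁ + N₂) (K₁ + K₂)
      (a₁ + a₂) (b₁ + b₂) (c₁ + c₂) (d₁ + d₂) := by
  obtain ⟨m1, n1, k1, C1, A1, B1, ac1, bc1, D1, E1⟩ := h₁
  obtain ⟨m2, n2, k2, C2, A2, B2, ac2, bc2, D2, E2⟩ := h₂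
  refine ⟨by positivity, by positivity, by positivity, abs_add_le' C1 C2, abs_add_le' A1 A2,
    abs_add_le' B1 B2, ?_, ?_, ?_, ?_⟩
  · convert abs_add_le' ac1 ac2 using 1
    · congr 1; ring
    · ring
  · convert abs_add_le' bc1 bc2 using 1
    · congr 1; ring
    · ring
  · convert abs_add_le' D1 D2 using 1
    ring
  · convert abs_add_le' E1 E2 using 1
    · congr 1; ring
    · ring

lemma AA.neg {r δ M₁ N₁ K₁ a₁ b₁ c₁ d₁ : ℝ}
    (h₁ : AA r δ M₁ N₁ K₁ a₁ b₁ c₁ d₁) :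
    AA r δ M₁ N₁ K₁ (-a₁) (-b₁) (-c₁) (-d₁) := by
  obtain ⟨m1, n1, k1, C1, A1, B1, ac1, bc1, D1, E1⟩ := h₁
  refine ⟨m1, n1, k1, by rwa [abs_neg], by rwa [abs_neg], by rwa [abs_neg], ?_, ?_,
    by rwa [abs_neg], ?_⟩
  · rw [← abs_neg]; convert ac1 using 2; ring
  · rw [← abs_neg]; convert bc1 using 2; ring
  · rw [← abs_neg]; convert E1 using 2; ring

lemma AA.sub {r δ M₁ N₁ K₁ a₁ b₁ c₁ d₁ M₂ N₂ K₂ a₂ b₂ c₂ d₂ : ℝ}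
    (h₁ : AA r δ M₁ N₁ K₁ a₁ b₁ c₁ d₁) (h₂ : AA r δ M₂ N₂ K₂ a₂ b₂ c₂ d₂) :
    AA r δ (M₁ + M₂) (N₁ + N₂) (K₁ + K₂)
      (a₁ - a₂) (b₁ - b₂) (c₁ - c₂) (d₁ - d₂) := by
  simp only [sub_eq_add_neg]
  exact h₁.add h₂.neg

lemma AA.fin {r δ M N K a b c d d' : ℝ} (hr : 0 ≤ r) (hδ : 0 ≤ δ)
    (h : AA r δ M N K a b c d) (hK : K ≤ 1000000)
    (hd : d = d') : |a - b - d'| ≤ 1000000 * r * δ := by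
  subst hd
  refine h.2.2.2.2.2.2.2.2.2.trans ?_
  gcongr

noncomputable def GG (k : Fin 5) (p : Fin 5 → ℝ) : ℝ :=
  ![g0 (p 0) (p 1) (p 2) (p 3) (p 4), g1 (p 0) (p 1) (p 2) (p 3) (p 4),
    g2 (p 0) (p 1) (p 2) (p 3) (p 4), g3 (p 0) (p 1) (p 2) (p 3) (p 4),
    g4 (p 0) (p 1) (p 2) (p 3) (p 4)] k

noncomputable def dGG (k : Fin 5) (p z : Fin 5 → ℝ) : ℝ :=
  ![dg0 (p 0) (p 1) (p 2) (p 3) (p 4) (z 0) (z 1) (z 2) (z 3) (z 4),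
    dg1 (p 0) (p 1) (p 2) (p 3) (p 4) (z 0) (z 1) (z 2) (z 3) (z 4),
    dg2 (p 0) (p 1) (p 2) (p 3) (p 4) (z 0) (z 1) (z 2) (z 3) (z 4),
    dg3 (p 0) (p 1) (p 2) (p 3) (p 4) (z 0) (z 1) (z 2) (z 3) (z 4),
    dg4 (p 0) (p 1) (p 2) (p 3) (p 4) (z 0) (z 1) (z 2) (z 3) (z 4)] k

lemma approx (p q c : Fin 5 → ℝ) (r δ : ℝ) (hr : 0 ≤ r) (hr' : r ≤ 1 / 2) (hδ : 0 ≤ δ)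
    (hc : ∀ i, |c i| ≤ 5 / 2)
    (hp : ∀ i, |p i - c i| ≤ r) (hq : ∀ i, |q i - c i| ≤ r) (hpq : ∀ i, |p i - q i| ≤ δ)
    (k : Fin 5) : |GG k p - GG k q - dGG k c (p - q)| ≤ 1000000 * r * δ := by
  have hv : ∀ i, AA r δ 3 1 0 (p i) (q i) (c i) (p i - q i) := by
    intro i
    have h1 := hc i
    have h2 := hp i
    have h3 := hq i
    refine ⟨by norm_num, by norm_num, le_rfl, by linarith, ?_, ?_, by linarith, by linarith,
      by linarith [hpq i], by simp⟩
    · have := abs_add_le' h2 h1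
      rw [sub_add_cancel] at this; linarith
    · have := abs_add_le' h3 h1
      rw [sub_add_cancel] at this; linarith
  fin_cases k
  all_goals
    simp only [GG, dGG, g0, g1, g2, g3, g4, pow_succ, pow_zero, one_mul, Fin.zero_eta, Fin.mk_one,
      Fin.reduceFinMk, Matrix.cons_val, Matrix.cons_val_zero, Matrix.cons_val_one]
    apply AA.fin hr hδ
    case h =>
      repeat' with_reducible first
        | exact hv _
        | exact AA.const _ _ _
        | apply AA.mul
        | apply AA.add
        | apply AA.sub
        | apply AA.neg
    case hK => norm_num
    case hd =>
      simp only [dg0, dg1, dg2, dg3, dg4, Pi.sub_apply]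
      ring

lemma key (c : Fin 5 → ℝ) (V : Fin 5 → Fin 5 → ℝ) (hc : ∀ i, |c i| ≤ 5 / 2)
    (hV : ∀ i, ∑ k, |V i k| ≤ 100)
    (h1 : ∀ i, |∑ k, V i k * GG k c| ≤ 1 / 2000000000)
    (h2 : ∀ z : Fin 5 → ℝ, ∀ δ : ℝ, (∀ i, |z i| ≤ δ) →
      ∀ i, |z i - ∑ k, V i k * dGG k c z| ≤ δ / 4) :
    ∃ p : Fin 5 → ℝ, (∀ i, |p i - c i| ≤ 1 / 1000000000) ∧ ∀ i, ∑ k, V i k * GG k p = 0 := by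
  set r : ℝ := 1 / 1000000000 with hr
  let T : (Fin 5 → ℝ) → (Fin 5 → ℝ) := fun p i => p i - ∑ k, V i k * GG k p
  have hball : ∀ p, p ∈ Metric.closedBall c r ↔ ∀ i, |p i - c i| ≤ r := by
    intro p
    rw [Metric.mem_closedBall, dist_pi_le_iff (by norm_num [hr])]
    simp [Real.dist_eq]
  have hlip : ∀ p ∈ Metric.closedBall c r, ∀ q ∈ Metric.closedBall c r,
      dist (T p) (T q) ≤ 1 / 2 * dist p q := by
    intro p hp q hq
    rw [hball] at hp hq
    have hpq : ∀ i, |p i - q i| ≤ dist p q := fun i => by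
      rw [← Real.dist_eq]; exact dist_le_pi_dist p q i
    rw [dist_pi_le_iff (by positivity)]
    intro i
    rw [Real.dist_eq]
    have e1 := h2 (p - q) (dist p q) hpq i
    have e2 : |∑ k, V i k * (GG k p - GG k q - dGG k c (p - q))| ≤
        100 * (1000000 * r * dist p q) := by
      refine (Finset.abs_sum_le_sum_abs _ _).trans ?_
      calc ∑ k, |V i k * (GG k p - GG k q - dGG k c (p - q))|
          ≤ ∑ k, |V i k| * (1000000 * r * dist p q) := by
            refine Finset.sum_le_sum fun k _ => ?_
            exact abs_mul_le' le_rfl (approx p q c r _ (by norm_num [hr]) (by norm_num [hr])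
              dist_nonneg hc hp hq hpq k)
        _ = (∑ k, |V i k|) * (1000000 * r * dist p q) := by rw [Finset.sum_mul]
        _ ≤ _ := by
          gcongr
          exact hV i
    have e3 : T p i - T q i = ((p - q) i - ∑ k, V i k * dGG k c (p - q)) -
        ∑ k, V i k * (GG k p - GG k q - dGG k c (p - q)) := by
      simp only [T, mul_sub, Finset.sum_sub_distrib, Pi.sub_apply]
      ring
    rw [e3]
    refine (abs_sub _ _).trans ?_
    have : (0:ℝ) ≤ dist p q := dist_nonneg
    rw [hr] at e2
    linarith
  have hcc : c ∈ Metric.closedBall c r := Metric.mem_closedBall_self (by norm_num [hr])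
  have hTc : dist (T c) c ≤ r / 2 := by
    rw [dist_pi_le_iff (by norm_num [hr])]
    intro i
    rw [Real.dist_eq]
    have := h1 i
    simp only [T, sub_sub_cancel_left, abs_neg]
    rw [hr]
    refine this.trans ?_
    norm_num
  have hmaps : Set.MapsTo T (Metric.closedBall c r) (Metric.closedBall c r) := by
    intro p hp
    have e := hlip p hp c hcc
    rw [Metric.mem_closedBall] at hp ⊢
    calc dist (T p) c ≤ dist (T p) (T c) + dist (T c) c := dist_triangle _ _ _
      _ ≤ 1 / 2 * dist p c + r / 2 := add_le_add e hTc
      _ ≤ 1 / 2 * r + r / 2 := by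
        refine add_le_add ?_ le_rfl
        exact mul_le_mul_of_nonneg_left hp (by norm_num)
      _ = r := by ring
  have hcontr : ContractingWith (1 / 2) (hmaps.restrict T _ _) := by
    refine ⟨by rw [← NNReal.coe_lt_coe]; norm_num, ?_⟩
    refine LipschitzWith.of_dist_le_mul fun p q => ?_
    have := hlip p p.2 q q.2
    simpa [Subtype.dist_eq] using this
  obtain ⟨p, hp, hfix, -⟩ := hcontr.exists_fixedPoint'
    (Metric.isClosed_closedBall.isComplete) hmaps hcc (edist_ne_top _ _)
  refine ⟨p, (hball p).1 hp, fun i => ?_⟩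
  have : p i - ∑ k, V i k * GG k p = p i := congrFun hfix i
  linarith

set_option maxHeartbeats 2000000 in
lemma sol0 : ∃ u0 u1 u2 x2 x3 : ℝ, 0.96 < u0 ∧ u0 < 0.97 ∧ 0.07 < u1 ∧ u1 < 0.08 ∧ 0.24 < u2 ∧ u2 < 0.25 ∧ 0.66 < x2 ∧ x2 < 0.67 ∧ 1.18 < x3 ∧ x3 < 1.19 ∧
    g0 u0 u1 u2 x2 x3 = 0 ∧ g1 u0 u1 u2 x2 x3 = 0 ∧ g2 u0 u1 u2 x2 x3 = 0 ∧ g3 u0 u1 u2 x2 x3 = 0 ∧ g4 u0 u1 u2 x2 x3 = 0 := by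
  obtain ⟨p, hp, hT⟩ := key
    ![0.9622410150515, 0.0736217308793, 0.2488048767827, 0.6699476173857, 1.1800573459107]
    ![![0.589367, 2.334541, 0.068545, 0.045893, -0.000262],
      ![-0.001148, -0.253579, -0.003757, 0.000464, -0.000070],
      ![0.000946, -0.001766, -0.017387, 0.000121, -0.000328],
      ![-0.073117, -0.318414, 0.009884, 0.023351, 0.000084],
      ![-0.032238, -0.142545, 0.016862, 0.005864, -0.011019]]
    (by simp [Fin.forall_fin_succ]; norm_num [abs_le]) (by simp only [Fin.forall_fin_succ]; simp [Fin.sum_univ_succ]; norm_num [abs_of_nonneg, abs_of_neg])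
    (by
      simp only [Fin.forall_fin_succ, GG, g0, g1, g2, g3, g4]
      simp [Fin.sum_univ_succ]
      norm_num [abs_le]) (by
      intro z δ hz
      have hz0 := abs_le.1 (hz 0); have hz1 := abs_le.1 (hz 1); have hz2 := abs_le.1 (hz 2)
      have hz3 := abs_le.1 (hz 3); have hz4 := abs_le.1 (hz 4)
      obtain ⟨a0, b0⟩ := hz0; obtain ⟨a1, b1⟩ := hz1; obtain ⟨a2, b2⟩ := hz2
      obtain ⟨a3, b3⟩ := hz3; obtain ⟨a4, b4⟩ := hz4
      clear hz
      intro i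
      fin_cases i <;>
      · simp [dGG, dg0, dg1, dg2, dg3, dg4, Fin.sum_univ_succ]
        rw [abs_le]
        generalize z 0 = z0 at *; generalize z 1 = z1 at *; generalize z 2 = z2 at *
        generalize z 3 = z3 at *; generalize z 4 = z4 at *
        ring_nf
        constructor <;> linarith)
  have q0 := abs_le.1 (hp 0); have q1 := abs_le.1 (hp 1); have q2 := abs_le.1 (hp 2)
  have q3 := abs_le.1 (hp 3); have q4 := abs_le.1 (hp 4)
  have t0 := hT 0; have t1 := hT 1; have t2 := hT 2; have t3 := hT 3; have t4 := hT 4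
  clear hp hT
  simp [Fin.sum_univ_succ, GG] at q0 q1 q2 q3 q4 t0 t1 t2 t3 t4
  obtain ⟨a0, b0⟩ := q0; obtain ⟨a1, b1⟩ := q1; obtain ⟨a2, b2⟩ := q2
  obtain ⟨a3, b3⟩ := q3; obtain ⟨a4, b4⟩ := q4
  refine ⟨p 0, p 1, p 2, p 3, p 4, ?_⟩
  generalize g0 (p 0) (p 1) (p 2) (p 3) (p 4) = y0 at *
  generalize g1 (p 0) (p 1) (p 2) (p 3) (p 4) = y1 at *
  generalize g2 (p 0) (p 1) (p 2) (p 3) (p 4) = y2 at *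
  generalize g3 (p 0) (p 1) (p 2) (p 3) (p 4) = y3 at *
  generalize g4 (p 0) (p 1) (p 2) (p 3) (p 4) = y4 at *
  refine ⟨?_, ?_, ?_, ?_, ?_, ?_, ?_, ?_, ?_, ?_, ?_, ?_, ?_, ?_, ?_⟩
  iterate 10 · clear t0 t1 t2 t3 t4; linarith
  all_goals
    clear a0 a1 a2 a3 a4 b0 b1 b2 b3 b4
    linarith

set_option maxHeartbeats 2000000 in
lemma sol1 : ∃ u0 u1 u2 x2 x3 : ℝ, 0.12 < u0 ∧ u0 < 0.13 ∧ 0.10 < u1 ∧ u1 < 0.11 ∧ 0.24 < u2 ∧ u2 < 0.25 ∧ 1.00 < x2 ∧ x2 < 1.01 ∧ 0.121 < x3 ∧ x3 < 0.122 ∧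
    g0 u0 u1 u2 x2 x3 = 0 ∧ g1 u0 u1 u2 x2 x3 = 0 ∧ g2 u0 u1 u2 x2 x3 = 0 ∧ g3 u0 u1 u2 x2 x3 = 0 ∧ g4 u0 u1 u2 x2 x3 = 0 := by
  obtain ⟨p, hp, hT⟩ := key
    ![0.1259040740138, 0.1084394138570, 0.2454130523720, 1.0005213531156, 0.1216930077631]
    ![![-7.101238, 71.728812, 0.153698, 0.045285, 0.386873],
      ![7.046078, -71.515222, -0.159886, -0.038851, -0.273229],
      ![-0.067278, 0.267955, -0.070730, -0.008158, 0.003198],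
      ![-0.483538, 4.290046, 0.009389, -0.029899, 0.020084],
      ![-5.183230, 31.233259, 0.064977, 0.021839, 0.201443]]
    (by simp [Fin.forall_fin_succ]; norm_num [abs_le]) (by simp only [Fin.forall_fin_succ]; simp [Fin.sum_univ_succ]; norm_num [abs_of_nonneg, abs_of_neg])
    (by
      simp only [Fin.forall_fin_succ, GG, g0, g1, g2, g3, g4]
      simp [Fin.sum_univ_succ]
      norm_num [abs_le]) (by
      intro z δ hz
      have hz0 := abs_le.1 (hz 0); have hz1 := abs_le.1 (hz 1); have hz2 := abs_le.1 (hz 2)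
      have hz3 := abs_le.1 (hz 3); have hz4 := abs_le.1 (hz 4)
      obtain ⟨a0, b0⟩ := hz0; obtain ⟨a1, b1⟩ := hz1; obtain ⟨a2, b2⟩ := hz2
      obtain ⟨a3, b3⟩ := hz3; obtain ⟨a4, b4⟩ := hz4
      clear hz
      intro i
      fin_cases i <;>
      · simp [dGG, dg0, dg1, dg2, dg3, dg4, Fin.sum_univ_succ]
        rw [abs_le]
        generalize z 0 = z0 at *; generalize z 1 = z1 at *; generalize z 2 = z2 at *
        generalize z 3 = z3 at *; generalize z 4 = z4 at *
        ring_nf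
        constructor <;> linarith)
  have q0 := abs_le.1 (hp 0); have q1 := abs_le.1 (hp 1); have q2 := abs_le.1 (hp 2)
  have q3 := abs_le.1 (hp 3); have q4 := abs_le.1 (hp 4)
  have t0 := hT 0; have t1 := hT 1; have t2 := hT 2; have t3 := hT 3; have t4 := hT 4
  clear hp hT
  simp [Fin.sum_univ_succ, GG] at q0 q1 q2 q3 q4 t0 t1 t2 t3 t4
  obtain ⟨a0, b0⟩ := q0; obtain ⟨a1, b1⟩ := q1; obtain ⟨a2, b2⟩ := q2
  obtain ⟨a3, b3⟩ := q3; obtain ⟨a4, b4⟩ := q4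
  refine ⟨p 0, p 1, p 2, p 3, p 4, ?_⟩
  generalize g0 (p 0) (p 1) (p 2) (p 3) (p 4) = y0 at *
  generalize g1 (p 0) (p 1) (p 2) (p 3) (p 4) = y1 at *
  generalize g2 (p 0) (p 1) (p 2) (p 3) (p 4) = y2 at *
  generalize g3 (p 0) (p 1) (p 2) (p 3) (p 4) = y3 at *
  generalize g4 (p 0) (p 1) (p 2) (p 3) (p 4) = y4 at *
  refine ⟨?_, ?_, ?_, ?_, ?_, ?_, ?_, ?_, ?_, ?_, ?_, ?_, ?_, ?_, ?_⟩
  iterate 10 · clear t0 t1 t2 t3 t4; linarith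
  all_goals
    clear a0 a1 a2 a3 a4 b0 b1 b2 b3 b4
    linarith

set_option maxHeartbeats 2000000 in
lemma sol2 : ∃ u0 u1 u2 x2 x3 : ℝ, 0.22 < u0 ∧ u0 < 0.23 ∧ 0.15 < u1 ∧ u1 < 0.16 ∧ 1.13 < u2 ∧ u2 < 1.14 ∧ 1.00 < x2 ∧ x2 < 1.01 ∧ 0.207 < x3 ∧ x3 < 0.208 ∧
    g0 u0 u1 u2 x2 x3 = 0 ∧ g1 u0 u1 u2 x2 x3 = 0 ∧ g2 u0 u1 u2 x2 x3 = 0 ∧ g3 u0 u1 u2 x2 x3 = 0 ∧ g4 u0 u1 u2 x2 x3 = 0 := by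
  obtain ⟨p, hp, hT⟩ := key
    ![0.2232933212112, 0.1536101117978, 1.1356289833079, 1.0023023878077, 0.2075486053595]
    ![![-1.470091, 3.873075, 0.029760, 0.040907, 0.202301],
      ![1.325482, -3.783099, -0.017256, -0.021149, -0.082101],
      ![0.044977, 0.139493, 0.042127, 0.007459, -0.004499],
      ![-0.133635, 0.241793, 0.001515, -0.018656, 0.009741],
      ![-1.840075, 1.303095, 0.014786, 0.022158, 0.114724]]
    (by simp [Fin.forall_fin_succ]; norm_num [abs_le]) (by simp only [Fin.forall_fin_succ]; simp [Fin.sum_univ_succ]; norm_num [abs_of_nonneg, abs_of_neg])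
    (by
      simp only [Fin.forall_fin_succ, GG, g0, g1, g2, g3, g4]
      simp [Fin.sum_univ_succ]
      norm_num [abs_le]) (by
      intro z δ hz
      have hz0 := abs_le.1 (hz 0); have hz1 := abs_le.1 (hz 1); have hz2 := abs_le.1 (hz 2)
      have hz3 := abs_le.1 (hz 3); have hz4 := abs_le.1 (hz 4)
      obtain ⟨a0, b0⟩ := hz0; obtain ⟨a1, b1⟩ := hz1; obtain ⟨a2, b2⟩ := hz2
      obtain ⟨a3, b3⟩ := hz3; obtain ⟨a4, b4⟩ := hz4
      clear hz
      intro i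
      fin_cases i <;>
      · simp [dGG, dg0, dg1, dg2, dg3, dg4, Fin.sum_univ_succ]
        rw [abs_le]
        generalize z 0 = z0 at *; generalize z 1 = z1 at *; generalize z 2 = z2 at *
        generalize z 3 = z3 at *; generalize z 4 = z4 at *
        ring_nf
        constructor <;> linarith)
  have q0 := abs_le.1 (hp 0); have q1 := abs_le.1 (hp 1); have q2 := abs_le.1 (hp 2)
  have q3 := abs_le.1 (hp 3); have q4 := abs_le.1 (hp 4)
  have t0 := hT 0; have t1 := hT 1; have t2 := hT 2; have t3 := hT 3; have t4 := hT 4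
  clear hp hT
  simp [Fin.sum_univ_succ, GG] at q0 q1 q2 q3 q4 t0 t1 t2 t3 t4
  obtain ⟨a0, b0⟩ := q0; obtain ⟨a1, b1⟩ := q1; obtain ⟨a2, b2⟩ := q2
  obtain ⟨a3, b3⟩ := q3; obtain ⟨a4, b4⟩ := q4
  refine ⟨p 0, p 1, p 2, p 3, p 4, ?_⟩
  generalize g0 (p 0) (p 1) (p 2) (p 3) (p 4) = y0 at *
  generalize g1 (p 0) (p 1) (p 2) (p 3) (p 4) = y1 at *
  generalize g2 (p 0) (p 1) (p 2) (p 3) (p 4) = y2 at *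
  generalize g3 (p 0) (p 1) (p 2) (p 3) (p 4) = y3 at *
  generalize g4 (p 0) (p 1) (p 2) (p 3) (p 4) = y4 at *
  refine ⟨?_, ?_, ?_, ?_, ?_, ?_, ?_, ?_, ?_, ?_, ?_, ?_, ?_, ?_, ?_⟩
  iterate 10 · clear t0 t1 t2 t3 t4; linarith
  all_goals
    clear a0 a1 a2 a3 a4 b0 b1 b2 b3 b4
    linarith

set_option maxHeartbeats 2000000 in
lemma sol3 : ∃ u0 u1 u2 x2 x3 : ℝ, 1.57 < u0 ∧ u0 < 1.58 ∧ 1.36 < u1 ∧ u1 < 1.37 ∧ 0.31 < u2 ∧ u2 < 0.32 ∧ 1.11 < x2 ∧ x2 < 1.12 ∧ 1.53 < x3 ∧ x3 < 1.54 ∧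
    g0 u0 u1 u2 x2 x3 = 0 ∧ g1 u0 u1 u2 x2 x3 = 0 ∧ g2 u0 u1 u2 x2 x3 = 0 ∧ g3 u0 u1 u2 x2 x3 = 0 ∧ g4 u0 u1 u2 x2 x3 = 0 := by
  obtain ⟨p, hp, hT⟩ := key
    ![1.5711912321434, 1.3666214912166, 0.3157738045477, 1.1132523069278, 1.5303651868867]
    ![![0.026073, -0.024836, 0.011342, -0.113585, -0.006156],
      ![-0.003369, 0.075208, 0.024520, 0.041018, 0.002129],
      ![0.000848, -0.004532, -0.006967, -0.010188, -0.000589],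
      ![0.006868, -0.058025, -0.007933, -0.089496, -0.004518],
      ![0.007488, -0.061306, -0.004593, -0.096608, -0.008564]]
    (by simp [Fin.forall_fin_succ]; norm_num [abs_le]) (by simp only [Fin.forall_fin_succ]; simp [Fin.sum_univ_succ]; norm_num [abs_of_nonneg, abs_of_neg])
    (by
      simp only [Fin.forall_fin_succ, GG, g0, g1, g2, g3, g4]
      simp [Fin.sum_univ_succ]
      norm_num [abs_le]) (by
      intro z δ hz
      have hz0 := abs_le.1 (hz 0); have hz1 := abs_le.1 (hz 1); have hz2 := abs_le.1 (hz 2)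
      have hz3 := abs_le.1 (hz 3); have hz4 := abs_le.1 (hz 4)
      obtain ⟨a0, b0⟩ := hz0; obtain ⟨a1, b1⟩ := hz1; obtain ⟨a2, b2⟩ := hz2
      obtain ⟨a3, b3⟩ := hz3; obtain ⟨a4, b4⟩ := hz4
      clear hz
      intro i
      fin_cases i <;>
      · simp [dGG, dg0, dg1, dg2, dg3, dg4, Fin.sum_univ_succ]
        rw [abs_le]
        generalize z 0 = z0 at *; generalize z 1 = z1 at *; generalize z 2 = z2 at *
        generalize z 3 = z3 at *; generalize z 4 = z4 at *
        ring_nf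
        constructor <;> linarith)
  have q0 := abs_le.1 (hp 0); have q1 := abs_le.1 (hp 1); have q2 := abs_le.1 (hp 2)
  have q3 := abs_le.1 (hp 3); have q4 := abs_le.1 (hp 4)
  have t0 := hT 0; have t1 := hT 1; have t2 := hT 2; have t3 := hT 3; have t4 := hT 4
  clear hp hT
  simp [Fin.sum_univ_succ, GG] at q0 q1 q2 q3 q4 t0 t1 t2 t3 t4
  obtain ⟨a0, b0⟩ := q0; obtain ⟨a1, b1⟩ := q1; obtain ⟨a2, b2⟩ := q2
  obtain ⟨a3, b3⟩ := q3; obtain ⟨a4, b4⟩ := q4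
  refine ⟨p 0, p 1, p 2, p 3, p 4, ?_⟩
  generalize g0 (p 0) (p 1) (p 2) (p 3) (p 4) = y0 at *
  generalize g1 (p 0) (p 1) (p 2) (p 3) (p 4) = y1 at *
  generalize g2 (p 0) (p 1) (p 2) (p 3) (p 4) = y2 at *
  generalize g3 (p 0) (p 1) (p 2) (p 3) (p 4) = y3 at *
  generalize g4 (p 0) (p 1) (p 2) (p 3) (p 4) = y4 at *
  refine ⟨?_, ?_, ?_, ?_, ?_, ?_, ?_, ?_, ?_, ?_, ?_, ?_, ?_, ?_, ?_⟩
  iterate 10 · clear t0 t1 t2 t3 t4; linarith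
  all_goals
    clear a0 a1 a2 a3 a4 b0 b1 b2 b3 b4
    linarith

set_option maxHeartbeats 2000000 in
lemma sol4 : ∃ u0 u1 u2 x2 x3 : ℝ, 2.18 < u0 ∧ u0 < 2.19 ∧ 0.10 < u1 ∧ u1 < 0.11 ∧ 0.33 < u2 ∧ u2 < 0.34 ∧ 1.59 < x2 ∧ x2 < 1.60 ∧ 2.16 < x3 ∧ x3 < 2.17 ∧
    g0 u0 u1 u2 x2 x3 = 0 ∧ g1 u0 u1 u2 x2 x3 = 0 ∧ g2 u0 u1 u2 x2 x3 = 0 ∧ g3 u0 u1 u2 x2 x3 = 0 ∧ g4 u0 u1 u2 x2 x3 = 0 := by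
  obtain ⟨p, hp, hT⟩ := key
    ![2.1869813437177, 0.1030980826826, 0.3385159969574, 1.5911458949053, 2.1692737914084]
    ![![0.083501, 0.251218, 0.013233, -0.002233, -0.000201],
      ![0.000147, -0.013448, -0.000522, -0.000219, -0.000014],
      ![0.000579, 0.001756, -0.002149, -0.000818, -0.000056],
      ![0.000883, 0.006336, 0.002749, -0.004594, -0.000221],
      ![0.001714, 0.010953, 0.005389, -0.007485, -0.001605]]
    (by simp [Fin.forall_fin_succ]; norm_num [abs_le]) (by simp only [Fin.forall_fin_succ]; simp [Fin.sum_univ_succ]; norm_num [abs_of_nonneg, abs_of_neg])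
    (by
      simp only [Fin.forall_fin_succ, GG, g0, g1, g2, g3, g4]
      simp [Fin.sum_univ_succ]
      norm_num [abs_le]) (by
      intro z δ hz
      have hz0 := abs_le.1 (hz 0); have hz1 := abs_le.1 (hz 1); have hz2 := abs_le.1 (hz 2)
      have hz3 := abs_le.1 (hz 3); have hz4 := abs_le.1 (hz 4)
      obtain ⟨a0, b0⟩ := hz0; obtain ⟨a1, b1⟩ := hz1; obtain ⟨a2, b2⟩ := hz2
      obtain ⟨a3, b3⟩ := hz3; obtain ⟨a4, b4⟩ := hz4
      clear hz
      intro i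
      fin_cases i <;>
      · simp [dGG, dg0, dg1, dg2, dg3, dg4, Fin.sum_univ_succ]
        rw [abs_le]
        generalize z 0 = z0 at *; generalize z 1 = z1 at *; generalize z 2 = z2 at *
        generalize z 3 = z3 at *; generalize z 4 = z4 at *
        ring_nf
        constructor <;> linarith)
  have q0 := abs_le.1 (hp 0); have q1 := abs_le.1 (hp 1); have q2 := abs_le.1 (hp 2)
  have q3 := abs_le.1 (hp 3); have q4 := abs_le.1 (hp 4)
  have t0 := hT 0; have t1 := hT 1; have t2 := hT 2; have t3 := hT 3; have t4 := hT 4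
  clear hp hT
  simp [Fin.sum_univ_succ, GG] at q0 q1 q2 q3 q4 t0 t1 t2 t3 t4
  obtain ⟨a0, b0⟩ := q0; obtain ⟨a1, b1⟩ := q1; obtain ⟨a2, b2⟩ := q2
  obtain ⟨a3, b3⟩ := q3; obtain ⟨a4, b4⟩ := q4
  refine ⟨p 0, p 1, p 2, p 3, p 4, ?_⟩
  generalize g0 (p 0) (p 1) (p 2) (p 3) (p 4) = y0 at *
  generalize g1 (p 0) (p 1) (p 2) (p 3) (p 4) = y1 at *
  generalize g2 (p 0) (p 1) (p 2) (p 3) (p 4) = y2 at *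
  generalize g3 (p 0) (p 1) (p 2) (p 3) (p 4) = y3 at *
  generalize g4 (p 0) (p 1) (p 2) (p 3) (p 4) = y4 at *
  refine ⟨?_, ?_, ?_, ?_, ?_, ?_, ?_, ?_, ?_, ?_, ?_, ?_, ?_, ?_, ?_⟩
  iterate 10 · clear t0 t1 t2 t3 t4; linarith
  all_goals
    clear a0 a1 a2 a3 a4 b0 b1 b2 b3 b4
    linarith

theorem stmt8 :
    (∃ u0 u1 u2 x2 x3 : ℝ,
      0.96 < u0 ∧ u0 < 0.97 ∧ 0.07 < u1 ∧ u1 < 0.08 ∧ 0.24 < u2 ∧ u2 < 0.25 ∧ 0.66 < x2 ∧ x2 < 0.67 ∧ 1.18 < x3 ∧ x3 < 1.19 ∧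
      g0 u0 u1 u2 x2 x3 = 0 ∧ g1 u0 u1 u2 x2 x3 = 0 ∧ g2 u0 u1 u2 x2 x3 = 0 ∧ g3 u0 u1 u2 x2 x3 = 0 ∧ g4 u0 u1 u2 x2 x3 = 0) ∧
    (∃ u0 u1 u2 x2 x3 : ℝ,
      0.12 < u0 ∧ u0 < 0.13 ∧ 0.10 < u1 ∧ u1 < 0.11 ∧ 0.24 < u2 ∧ u2 < 0.25 ∧ 1.00 < x2 ∧ x2 < 1.01 ∧ 0.121 < x3 ∧ x3 < 0.122 ∧
      g0 u0 u1 u2 x2 x3 = 0 ∧ g1 u0 u1 u2 x2 x3 = 0 ∧ g2 u0 u1 u2 x2 x3 = 0 ∧ g3 u0 u1 u2 x2 x3 = 0 ∧ g4 u0 u1 u2 x2 x3 = 0) ∧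
    (∃ u0 u1 u2 x2 x3 : ℝ,
      0.22 < u0 ∧ u0 < 0.23 ∧ 0.15 < u1 ∧ u1 < 0.16 ∧ 1.13 < u2 ∧ u2 < 1.14 ∧ 1.00 < x2 ∧ x2 < 1.01 ∧ 0.207 < x3 ∧ x3 < 0.208 ∧
      g0 u0 u1 u2 x2 x3 = 0 ∧ g1 u0 u1 u2 x2 x3 = 0 ∧ g2 u0 u1 u2 x2 x3 = 0 ∧ g3 u0 u1 u2 x2 x3 = 0 ∧ g4 u0 u1 u2 x2 x3 = 0) ∧
    (∃ u0 u1 u2 x2 x3 : ℝ,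
      1.57 < u0 ∧ u0 < 1.58 ∧ 1.36 < u1 ∧ u1 < 1.37 ∧ 0.31 < u2 ∧ u2 < 0.32 ∧ 1.11 < x2 ∧ x2 < 1.12 ∧ 1.53 < x3 ∧ x3 < 1.54 ∧
      g0 u0 u1 u2 x2 x3 = 0 ∧ g1 u0 u1 u2 x2 x3 = 0 ∧ g2 u0 u1 u2 x2 x3 = 0 ∧ g3 u0 u1 u2 x2 x3 = 0 ∧ g4 u0 u1 u2 x2 x3 = 0) ∧
    (∃ u0 u1 u2 x2 x3 : ℝ,
      2.18 < u0 ∧ u0 < 2.19 ∧ 0.10 < u1 ∧ u1 < 0.11 ∧ 0.33 < u2 ∧ u2 < 0.34 ∧ 1.59 < x2 ∧ x2 < 1.60 ∧ 2.16 < x3 ∧ x3 < 2.17 ∧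
      g0 u0 u1 u2 x2 x3 = 0 ∧ g1 u0 u1 u2 x2 x3 = 0 ∧ g2 u0 u1 u2 x2 x3 = 0 ∧ g3 u0 u1 u2 x2 x3 = 0 ∧ g4 u0 u1 u2 x2 x3 = 0) := by
  exact ⟨sol0, sol1, sol2, sol3, sol4⟩
end

section
/- For all real numbers x3 and u2 such that 2332*x3^3 - 4013*x3^2 + 1053*x3 - 72 = 0 and 2332*x3^3 - 6345*x3^2 + 4642*x3 - 224*u2 - 405 = 0, the quintuple (u0, u1, u2, x2, x3) with u0 = u1 = x3 and x2 = 1 satisfies g0 = g1 = g2 = g3 = g4 = 0. (These are naturally reductive Einstein solutions on E7(5) with u0 = u1 = x3 and x1 = x2.) -/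
theorem stmt9 :
    ∀ x3 u2 : ℝ,
      2332 * x3 ^ 3 - 4013 * x3 ^ 2 + 1053 * x3 - 72 = 0 →
      2332 * x3 ^ 3 - 6345 * x3 ^ 2 + 4642 * x3 - 224 * u2 - 405 = 0 →
      (g0 x3 x3 u2 1 x3 = 0 ∧ g1 x3 x3 u2 1 x3 = 0 ∧ g2 x3 x3 u2 1 x3 = 0 ∧ g3 x3 x3 u2 1 x3 = 0 ∧ g4 x3 x3 u2 1 x3 = 0) := by
  intro t u h1 h2
  have hu : u = (-333 + 3589 * t - 2332 * t ^ 2) / 224 := by linarith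
  subst hu
  unfold g0 g1 g2 g3 g4
  refine ⟨by ring, ?_, ?_, by ring, ?_⟩
  · linear_combination (3 * t ^ 2 * (37 / 1792 + 2885 / 12544 * t - 583 / 3136 * t ^ 2)) * h1
  · linear_combination (4 * t * (-3193 / 1568 + 583 / 392 * t)) * h1
  · linear_combination (t / 4) * h1
end

section
/- For all real numbers x2 and u1 such that (x2 - 1)*(4949*x2^3 - 9379*x2^2 + 5155*x2 - 875) = 0 and 525*u1 - 19796*x2^3 + 57312*x2^2 - 49561*x2 + 11520 = 0, the quintuple (u0, u1, u2, x2, x3) with u0 = u2 = x2 and x3 = 1 satisfies g0 = g1 = g2 = g3 = g4 = 0. (These are naturally reductive Einstein solutions on E7(5) with u0 = u2 = x2 and x1 = x3; for x2 = 1 one recovers the bi-invariant metric.) -/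
theorem stmt10 :
    ∀ x2 u1 : ℝ,
      (x2 - 1) * (4949 * x2 ^ 3 - 9379 * x2 ^ 2 + 5155 * x2 - 875) = 0 →
      525 * u1 - 19796 * x2 ^ 3 + 57312 * x2 ^ 2 - 49561 * x2 + 11520 = 0 →
      (g0 x2 u1 x2 x2 1 = 0 ∧ g1 x2 u1 x2 x2 1 = 0 ∧ g2 x2 u1 x2 x2 1 = 0 ∧ g3 x2 u1 x2 x2 1 = 0 ∧ g4 x2 u1 x2 x2 1 = 0) := by
  intro x u h1 h2
  have hx : x ≠ 0 := by
    rintro rfl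
    norm_num at h1
  have hL : 49 * x ^ 2 + 3 * u * x - 72 * x + 20 = 0 := by
    linear_combination (4 / 175) * h1 + (x / 175) * h2
  have hQ : 8 * u * x ^ 2 + 10 * u - 16 * u ^ 2 * x - 2 * x = 0 := by
    have h : (9 * x) * (8 * u * x ^ 2 + 10 * u - 16 * u ^ 2 * x - 2 * x) = 0 := by
      linear_combination (-8) * h1 +
        (24 * x ^ 2 + 30 - 16 * (3 * u * x - (49 * x ^ 2 - 72 * x + 20))) * hL
    exact (mul_eq_zero.mp h).resolve_left (mul_ne_zero (by norm_num) hx)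
  unfold g0 g1 g2 g3 g4
  refine ⟨?_, ?_, ?_, ?_, ?_⟩
  · linear_combination x * hQ
  · linear_combination (-x ^ 2) * hQ
  · linear_combination (3 * x ^ 2) * hL
  · linear_combination (-3 * x) * hL
  · linear_combination (3 * x) * hL
end
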